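/- Let σ₁,…,σₙ be positive integers with anisotropic dilations δ_λ on ℝⁿ, and let e be a real number. If f : ℝⁿ → ℝ is smooth and f(δ_λ(x)) = λ^e f(x) for every λ > 0 and every x ∈ ℝⁿ, then for every index k ∈ {1,…,n} with σ_k > e, the partial derivative ∂f/∂x_k vanishes identically; that is, f does not depend on the variable x_k. -/

import Mathlib

/-! Scaling commutes with differences: `f (x + v) - f x` equals `λ ^ (-e)` times the difference of
`f` at the contracted points `δ_λ (x + v)` and `δ_λ x`. If `δ_λ v = λ ^ s • v` and `f` is Lipschitz
near `0`, that difference is `O(λ ^ s)`, so for `e < s` letting `λ → 0⁺` forces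
`f (x + v) = f x`. -/

open Filter Topology

/-- The dilation `δ_lam` with real weights `σ`, multiplying the `i`-th coordinate by `lam ^ σ i`.
It is only meant for `0 < lam`, where the real power is the usual one. -/
noncomputable def anisotropicDilation {ι : Type*} (σ : ι → ℝ) (lam : ℝ) :
    (ι → ℝ) →ₗ[ℝ] (ι → ℝ) :=
  LinearMap.mulLeft ℝ fun i => lam ^ σ i

theorem anisotropicDilation_apply {ι : Type*} (σ : ι → ℝ) (lam : ℝ) (x : ι → ℝ) :
    anisotropicDilation σ lam x = fun i => lam ^ σ i * x i :=
  rfl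

theorem anisotropicDilation_single {ι : Type*} [DecidableEq ι] (σ : ι → ℝ) (lam : ℝ)
    (k : ι) (t : ℝ) :
    anisotropicDilation σ lam (Pi.single k t) = lam ^ σ k • Pi.single k t := by
  rw [← Pi.single_smul, smul_eq_mul]
  exact (Pi.single_mul_right (f := fun i => lam ^ σ i) t).symm

theorem tendsto_rpow_nhdsGT_zero {s : ℝ} (hs : 0 < s) :
    Tendsto (fun lam : ℝ => lam ^ s) (𝓝[>] 0) (𝓝 0) := by
  have h := (Real.continuousAt_rpow_const 0 s (Or.inr hs.le)).tendsto
  rw [Real.zero_rpow hs.ne'] at h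
  exact h.mono_left nhdsWithin_le_nhds

theorem tendsto_anisotropicDilation_nhdsGT_zero {ι : Type*} {σ : ι → ℝ} (hσ : ∀ i, 0 < σ i)
    (x : ι → ℝ) :
    Tendsto (fun lam => anisotropicDilation σ lam x) (𝓝[>] 0) (𝓝 0) := by
  refine tendsto_pi_nhds.2 fun i => ?_
  simpa only [anisotropicDilation_apply, Pi.zero_apply, zero_mul] using
    (tendsto_rpow_nhdsGT_zero (hσ i)).mul_const (x i)

theorem apply_add_eq_of_homogeneous_of_lipschitzOnWith {E F : Type*}
    [SeminormedAddCommGroup E] [NormedSpace ℝ E] [NormedAddCommGroup F] [NormedSpace ℝ F]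
    {δ : ℝ → E →ₗ[ℝ] E} (hδ : ∀ x, Tendsto (fun lam => δ lam x) (𝓝[>] 0) (𝓝 0))
    {f : E → F} {e : ℝ} (hom : ∀ lam : ℝ, 0 < lam → ∀ x, f (δ lam x) = lam ^ e • f x)
    {K : NNReal} {U : Set E} (hU : U ∈ 𝓝 0) (hf : LipschitzOnWith K f U)
    {v : E} {s : ℝ} (hv : ∀ lam : ℝ, 0 < lam → δ lam v = lam ^ s • v) (hs : e < s) (x : E) :
    f (x + v) = f x := by
  have bound : ∀ᶠ lam : ℝ in 𝓝[>] 0, ‖f (x + v) - f x‖ ≤ lam ^ (s - e) * (K * ‖v‖) := by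
    filter_upwards [self_mem_nhdsWithin, hδ (x + v) hU, hδ x hU] with lam hlam hxv hx
    replace hlam : 0 < lam := hlam
    have scaled : lam ^ e * ‖f (x + v) - f x‖ ≤ lam ^ s * (K * ‖v‖) :=
      calc lam ^ e * ‖f (x + v) - f x‖
          = ‖f (δ lam (x + v)) - f (δ lam x)‖ := by
            rw [hom lam hlam, hom lam hlam, ← smul_sub,
              norm_smul_of_nonneg (Real.rpow_nonneg hlam.le e)]
        _ ≤ K * ‖δ lam (x + v) - δ lam x‖ := hf.norm_sub_le hxv hx
        _ = lam ^ s * (K * ‖v‖) := by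
            rw [← map_sub, add_sub_cancel_left, hv lam hlam,
              norm_smul_of_nonneg (Real.rpow_nonneg hlam.le s), mul_left_comm]
    rwa [Real.rpow_sub hlam, div_mul_eq_mul_div, le_div_iff₀' (Real.rpow_pos_of_pos hlam e)]
  have vanishing : Tendsto (fun lam : ℝ => lam ^ (s - e) * (K * ‖v‖)) (𝓝[>] 0) (𝓝 0) := by
    simpa only [zero_mul] using (tendsto_rpow_nhdsGT_zero (sub_pos.2 hs)).mul_const (K * ‖v‖)
  exact sub_eq_zero.1 (norm_le_zero_iff.1 (ge_of_tendsto vanishing bound))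

theorem dependsOn_compl_singleton_iff {ι G β : Type*} [DecidableEq ι] [AddGroup G]
    {f : (ι → G) → β} {k : ι} :
    DependsOn f {k}ᶜ ↔ ∀ x t, f (x + Pi.single k t) = f x := by
  refine ⟨fun h x t => h fun i hi => ?_, fun h x y hxy => ?_⟩
  · simp [Pi.single_eq_of_ne (show i ≠ k from hi)]
  · have y_eq : y = x + Pi.single k (-x k + y k) := by
      ext i
      by_cases hi : i = k
      · subst hi; simp
      · simp [hi, hxy i hi]
    rw [y_eq, h]

theorem apply_eq_zero_of_hasFDerivAt_of_forall_add_smul_eq {𝕜 E F : Type*}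
    [NontriviallyNormedField 𝕜] [NormedAddCommGroup E] [NormedSpace 𝕜 E]
    [NormedAddCommGroup F] [NormedSpace 𝕜 F] {f : E → F} {f' : E →L[𝕜] F} {x v : E}
    (hf : HasFDerivAt f f' x) (hv : ∀ t : 𝕜, f (x + t • v) = f x) :
    f' v = 0 := by
  refine (hf.hasLineDerivAt v).unique ?_
  simpa only [HasLineDerivAt, hv] using hasDerivAt_const (0 : 𝕜) (f x)

theorem stmt_12_general {ι F : Type*} [Fintype ι] [NormedAddCommGroup F] [NormedSpace ℝ F]
    {σ : ι → ℝ} (hσ : ∀ i, 0 < σ i) {f : (ι → ℝ) → F}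
    (hf : ∃ K, ∃ U ∈ 𝓝 0, LipschitzOnWith K f U) {e : ℝ}
    (hom : ∀ lam : ℝ, 0 < lam → ∀ x, f (anisotropicDilation σ lam x) = lam ^ e • f x)
    {k : ι} (hk : e < σ k) :
    DependsOn f {k}ᶜ := by
  classical
  obtain ⟨K, U, hU, lipschitz⟩ := hf
  exact dependsOn_compl_singleton_iff.2 fun x t =>
    apply_add_eq_of_homogeneous_of_lipschitzOnWith (tendsto_anisotropicDilation_nhdsGT_zero hσ)
      hom hU lipschitz (fun lam _ => anisotropicDilation_single σ lam k t) hk x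

/-- Let `f : ℝⁿ → ℝ` be smooth and `δ_λ`-homogeneous of real degree `e`
(w.r.t. anisotropic dilations `δ_λ(x)_i = λ^(σ_i) x_i`, `σ_i` positive integers). Then for
every index `k` with `σ_k > e`, the partial derivative `∂f/∂x_k` vanishes identically. -/
theorem stmt_12 (n : ℕ) (σ : Fin n → ℕ) (hσ : ∀ i, 0 < σ i)
    (f : (Fin n → ℝ) → ℝ) (hf : ContDiff ℝ (⊤ : ℕ∞) f)
    (e : ℝ)
    (hom : ∀ lam : ℝ, 0 < lam → ∀ x : Fin n → ℝ,
      f (fun i => lam ^ (σ i) * x i) = lam ^ e * f x)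
    (k : Fin n) (hk : e < (σ k : ℝ)) :
    ∀ x, fderiv ℝ f x (Pi.single k 1) = 0 := by
  have indep : DependsOn f {k}ᶜ :=
    stmt_12_general (σ := fun i => σ i) (fun i => Nat.cast_pos.2 (hσ i))
      (hf.of_le (by simp)).contDiffAt.exists_lipschitzOnWith
      (by simpa only [anisotropicDilation_apply, Real.rpow_natCast, smul_eq_mul] using hom) hk
  exact fun x => apply_eq_zero_of_hasFDerivAt_of_forall_add_smul_eq
    (hf.differentiable (by simp) x).hasFDerivAt fun t => by
      simpa only [Pi.single_smul] using dependsOn_compl_singleton_iff.1 indep x (t • 1)
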